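/- Let B be the real 6×6 matrix B = (1/2)·M where M has rows (0, 2+√2, 0, (√2−6)/4, 0, (−2−5√2)/4), (−2−√2, 0, √2, 0, 1+√2, 0), (0, (√2−6)/4, 0, 2−√2, 0, (3√2−2)/4), (√2, 0, √2−2, 0, −1, 0), (0, (−2−5√2)/4, 0, (3√2−2)/4, 0, 1+1/√2), (1+√2, 0, −1, 0, −1−1/√2, 0). Set ω₁ := (1/2)·√(35/2 + 9√2). Then the characteristic polynomial of B equals λ⁴·(λ² + ω₁²); i.e., the eigenvalues of B are 0 with algebraic multiplicity 4 and the complex-conjugate pair ±iω₁. -/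

import Mathlib

open Polynomial

/-- The coefficient matrix of the linearized equations of motion about the coplanar ground
state for the sign-inverted standard couplings `J₁ = 1/2`, `J₂ = −(1+√2)/2`, `J₃ = −√2/2`. -/
noncomputable def linMatB : Matrix (Fin 6) (Fin 6) ℝ :=
  (1 / 2 : ℝ) •
    !![0, 2 + Real.sqrt 2, 0, (Real.sqrt 2 - 6) / 4, 0, (-2 - 5 * Real.sqrt 2) / 4;
       -2 - Real.sqrt 2, 0, Real.sqrt 2, 0, 1 + Real.sqrt 2, 0;
       0, (Real.sqrt 2 - 6) / 4, 0, 2 - Real.sqrt 2, 0, (3 * Real.sqrt 2 - 2) / 4;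
       Real.sqrt 2, 0, Real.sqrt 2 - 2, 0, -1, 0;
       0, (-2 - 5 * Real.sqrt 2) / 4, 0, (3 * Real.sqrt 2 - 2) / 4, 0, 1 + 1 / Real.sqrt 2;
       1 + Real.sqrt 2, 0, -1, 0, -1 - 1 / Real.sqrt 2, 0]

/-- The characteristic matrix of `linMatB` at the point `x`, with `1 / √2` rationalized. -/
lemma scalar_sub_linMatB (x : ℝ) :
    Matrix.scalar (Fin 6) x - linMatB =
      !![x, -(2 + √2) / 2, 0, (6 - √2) / 8, 0, (2 + 5 * √2) / 8;
         (2 + √2) / 2, x, -√2 / 2, 0, -(1 + √2) / 2, 0;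
         0, (6 - √2) / 8, x, (√2 - 2) / 2, 0, (2 - 3 * √2) / 8;
         -√2 / 2, 0, (2 - √2) / 2, x, 1 / 2, 0;
         0, (2 + 5 * √2) / 8, 0, (2 - 3 * √2) / 8, x, -(2 + √2) / 4;
         -(1 + √2) / 2, 0, 1 / 2, 0, (2 + √2) / 4, x] := by
  have h : (√2)⁻¹ = √2 / 2 := by
    rw [inv_eq_one_div, div_eq_div_iff (by positivity) two_ne_zero]
    norm_num
  ext i j
  fin_cases i <;> fin_cases j <;> simp [linMatB, h] <;> ring

/-- the characteristic polynomial of the linearization matrix `B` is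
`λ⁴(λ² + ω₁²)` with `ω₁ = (1/2)√(35/2 + 9√2)`; its eigenvalues are `0`
(multiplicity 4) and the pair `±iω₁`. -/
theorem charpoly_linMatB :
    linMatB.charpoly =
      X ^ 4 * (X ^ 2 + C (((1 / 2) * Real.sqrt (35 / 2 + 9 * Real.sqrt 2)) ^ 2)) := by
  refine Polynomial.funext fun x => ?_
  have h : √2 ^ 2 = (2 : ℝ) := Real.sq_sqrt zero_le_two
  rw [Matrix.eval_charpoly, scalar_sub_linMatB, mul_pow, Real.sq_sqrt (by positivity)]
  simp only [eval_mul, eval_pow, eval_X, eval_add, eval_C]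
  generalize √2 = s at h ⊢
  simp [Matrix.det_succ_row_zero, Fin.sum_univ_succ, Fin.succAbove]
  grind
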